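/- arXiv:2002.10704 — 5 statements merged into one kernel-verified Lean document; each statement's English description precedes it below -/
import Mathlib

section
/- (Strong faithfulness.) Fix a priority order σ and MRF valuations f_1,…,f_n on a finite item set M. Let A be a non-redundant σ-Lorenz dominating allocation for the profile (f_1,…,f_n), fix an agent v, and let S ⊆ A_v. Then every non-redundant σ-Lorenz dominating allocation for the profile in which f_v is replaced by the restricted valuation f_{v|S} (other valuations unchanged) gives agent v exactly the bundle S. -/
open Finset
open scoped Classical

variable {n : ℕ} {I : Type*} [DecidableEq I] [Fintype I]

/-- An allocation assigns pairwise disjoint bundles of items to the agents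
(items may remain unallocated). -/
def IsAllocation (A : Fin n → Finset I) : Prop :=
  ∀ i j : Fin n, i ≠ j → Disjoint (A i) (A j)

/-- The vector of utilities of an allocation under a profile of valuations. -/
def util {α : Type*} (f : Fin n → Finset I → α) (A : Fin n → Finset I) : Fin n → α :=
  fun i => f i (A i)

/-- The entries of the vector `u`, sorted in nondecreasing order. -/
noncomputable def sortedVec {α : Type*} [LinearOrder α] (u : Fin n → α) : List α :=
  (Finset.univ.val.map u).sort (· ≤ ·)

/-- `u` Lorenz-dominates `v`: for each `k`, the sum of the `k` smallest entries of `u`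
is at least the sum of the `k` smallest entries of `v`. -/
def LorenzGE {α : Type*} [LinearOrder α] [AddCommMonoid α] (u v : Fin n → α) : Prop :=
  ∀ k : ℕ, ((sortedVec v).take k).sum ≤ ((sortedVec u).take k).sum

/-- A matroid rank function: a normalized submodular valuation with dichotomous marginals. -/
structure IsMRF (f : Finset I → ℕ) : Prop where
  empty : f ∅ = 0
  submod : ∀ S T : Finset I, S ⊆ T → ∀ a : I,
      f (insert a T) + f S ≤ f (insert a S) + f T
  dichot : ∀ (S : Finset I) (a : I), f (insert a S) = f S ∨ f (insert a S) = f S + 1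

/-- Non-redundancy: removing any item from any agent's bundle strictly decreases its value. -/
def NonRedundant (f : Fin n → Finset I → ℕ) (A : Fin n → Finset I) : Prop :=
  ∀ i : Fin n, ∀ a ∈ A i, f i ((A i).erase a) < f i (A i)

/-- A Lorenz dominating allocation. -/
def LorenzDominating (f : Fin n → Finset I → ℕ) (A : Fin n → Finset I) : Prop :=
  ∀ B : Fin n → Finset I, IsAllocation B → LorenzGE (util f A) (util f B)

/-- The σ-perturbed utilities: agent `i` gets `f i (A i) + σ(i)/n²`, where the priority
`σ(i)` ranges over `{1,…,n}`. -/
noncomputable def pUtil (σ : Equiv.Perm (Fin n)) (f : Fin n → Finset I → ℕ)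
    (A : Fin n → Finset I) : Fin n → ℝ :=
  fun i => (f i (A i) : ℝ) + (((σ i : ℕ) : ℝ) + 1) / (n : ℝ) ^ 2

/-- A σ-Lorenz dominating allocation. -/
def SigmaLorenzDom (σ : Equiv.Perm (Fin n)) (f : Fin n → Finset I → ℕ)
    (A : Fin n → Finset I) : Prop :=
  ∀ B : Fin n → Finset I, IsAllocation B → LorenzGE (pUtil σ f A) (pUtil σ f B)

/-- Restriction of a valuation to a subset `D` of the items. -/
def restrictVal (f : Finset I → ℕ) (D : Finset I) : Finset I → ℕ := fun S => f (S ∩ D)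

/-- A partition of all the items into `n` (possibly empty) bundles. -/
def IsPartition (P : Fin n → Finset I) : Prop :=
  (∀ i j : Fin n, i ≠ j → Disjoint (P i) (P j)) ∧ ∀ a : I, ∃ j, a ∈ P j

/-- An XOS valuation: the pointwise maximum of a finite nonempty family of
nonnegative additive valuations. -/
def IsXOS (f : Finset I → ℝ) : Prop :=
  ∃ (k : ℕ) (w : Fin (k + 1) → I → ℝ),
    (∀ t a, 0 ≤ w t a) ∧
    ∀ S : Finset I, f S = Finset.univ.sup' Finset.univ_nonempty (fun t => ∑ a ∈ S, w t a)

/-- A dichotomous valuation (real-valued version). -/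
def IsDichotomousR (f : Finset I → ℝ) : Prop :=
  ∀ (S : Finset I) (a : I), f (insert a S) = f S ∨ f (insert a S) = f S + 1

/-- Envy-freeness up to one good. -/
def EF1 (f : Fin n → Finset I → ℝ) (A : Fin n → Finset I) : Prop :=
  ∀ i j : Fin n, f i (A j) ≤ f i (A i) ∨ ∃ e ∈ A j, f i ((A j).erase e) ≤ f i (A i)

/-- The maximum welfare attainable by a set `S` of agents. -/
noncomputable def maxWelfare (f : Fin n → Finset I → ℕ) (S : Finset (Fin n)) : ℕ :=
  Finset.sup (Finset.univ.filter fun B : Fin n → Finset I => IsAllocation B)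
    (fun B => ∑ j ∈ S, f j (B j))

/-- An allocation extended with index `none` for the set of unallocated items. -/
def extAlloc (A : Fin n → Finset I) : Option (Fin n) → Finset I
  | none => Finset.univ \ Finset.univ.biUnion A
  | some i => A i

set_option linter.unusedSectionVars false

namespace IsMRF

variable {f : Finset I → ℕ}

theorem le_insert (hf : IsMRF f) (S : Finset I) (a : I) : f S ≤ f (insert a S) := by
  rcases hf.dichot S a with h | h <;> omega

theorem le_union (hf : IsMRF f) (S T : Finset I) : f S ≤ f (T ∪ S) := by
  induction T using Finset.induction_on with
  | empty => simp
  | insert a T _ ih =>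
    rw [Finset.insert_union]
    exact ih.trans (hf.le_insert _ _)

theorem mono (hf : IsMRF f) {S T : Finset I} (h : S ⊆ T) : f S ≤ f T := by
  have := hf.le_union S T
  rwa [Finset.union_eq_left.mpr h] at this

theorem le_card (hf : IsMRF f) (S : Finset I) : f S ≤ S.card := by
  induction S using Finset.induction_on with
  | empty => simp [hf.empty]
  | insert a S ha ih =>
    rw [Finset.card_insert_of_notMem ha]
    rcases hf.dichot S a with h | h <;> omega

theorem union_eq_of_forall_insert_eq (hf : IsMRF f) {S T : Finset I}
    (h : ∀ a ∈ T, f (insert a S) = f S) : f (T ∪ S) = f S := by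
  induction T using Finset.induction_on with
  | empty => simp
  | insert a T _ ih =>
    have ih := ih fun b hb => h b (Finset.mem_insert_of_mem hb)
    have hsub := hf.submod S (T ∪ S) Finset.subset_union_right a
    have ha := h a (Finset.mem_insert_self a T)
    have hle := hf.le_insert (T ∪ S) a
    rw [Finset.insert_union]
    omega

/-- The augmentation property of independent sets. -/
theorem exists_augment (hf : IsMRF f) {X Y : Finset I} (hX : f X = X.card)
    (hY : f Y = Y.card) (h : Y.card < X.card) :
    ∃ e ∈ X, e ∉ Y ∧ f (insert e Y) = (insert e Y).card := by
  by_contra! hne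
  have hins : ∀ e ∈ X, f (insert e Y) = f Y := by
    intro e he
    by_cases heY : e ∈ Y
    · rw [Finset.insert_eq_of_mem heY]
    · have h1 := hne e he heY
      rw [Finset.card_insert_of_notMem heY] at h1
      rcases hf.dichot Y e with h2 | h2 <;> omega
  have h1 := hf.union_eq_of_forall_insert_eq hins
  have h2 := hf.mono (Finset.subset_union_left (s₁ := X) (s₂ := Y))
  omega

theorem eq_card_of_subset (hf : IsMRF f) {S T : Finset I} (hS : f S = S.card) (h : T ⊆ S) :
    f T = T.card := by
  have hunion : ∀ R : Finset I, f (R ∪ T) ≤ f T + R.card := by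
    intro R
    induction R using Finset.induction_on with
    | empty => simp
    | insert a R ha ih =>
      rw [Finset.insert_union, Finset.card_insert_of_notMem ha]
      rcases hf.dichot (R ∪ T) a with h | h <;> omega
  have h1 := hunion (S \ T)
  rw [Finset.sdiff_union_of_subset h] at h1
  have h2 := Finset.card_sdiff_add_card_eq_card h
  have h3 := hf.le_card T
  omega

theorem eq_card_of_forall_erase_lt (hf : IsMRF f) {S : Finset I}
    (h : ∀ a ∈ S, f (S.erase a) < f S) : f S = S.card := by
  suffices hT : ∀ T ⊆ S, f T = T.card from hT S subset_rfl
  intro T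
  induction T using Finset.induction_on with
  | empty => simp [hf.empty]
  | insert a T ha ih =>
    intro hTS
    obtain ⟨haS, hTS⟩ := Finset.insert_subset_iff.mp hTS
    have hsub := hf.submod T (S.erase a)
      (fun b hb => Finset.mem_erase.mpr ⟨fun hba => ha (hba ▸ hb), hTS hb⟩) a
    rw [Finset.insert_erase haS] at hsub
    have h1 := h a haS
    have h2 := ih hTS
    rw [Finset.card_insert_of_notMem ha]
    rcases hf.dichot T a with h3 | h3 <;> omega

theorem restrictVal (hf : IsMRF f) (D : Finset I) : IsMRF (restrictVal f D) where
  empty := by simp [_root_.restrictVal, hf.empty]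
  submod S T hST a := by
    by_cases ha : a ∈ D
    · simpa [_root_.restrictVal, Finset.insert_inter_of_mem ha] using
        hf.submod (S ∩ D) (T ∩ D) (Finset.inter_subset_inter_right hST) a
    · simp [_root_.restrictVal, Finset.insert_inter_of_notMem ha, add_comm]
  dichot S a := by
    by_cases ha : a ∈ D
    · simpa [_root_.restrictVal, Finset.insert_inter_of_mem ha] using hf.dichot (S ∩ D) a
    · simp [_root_.restrictVal, Finset.insert_inter_of_notMem ha]

end IsMRF

/-- Every agent's bundle is independent: its value is its cardinality. -/
def IsIndependent (f : Fin n → Finset I → ℕ) (A : Fin n → Finset I) : Prop :=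
  ∀ i, f i (A i) = (A i).card

theorem NonRedundant.isIndependent {f : Fin n → Finset I → ℕ} (hf : ∀ i, IsMRF (f i))
    {A : Fin n → Finset I} (h : NonRedundant f A) : IsIndependent f A :=
  fun i => (hf i).eq_card_of_forall_erase_lt (h i)

/-- If `Y` allocates `e` to no agent other than `v`, giving it to `v` yields an allocation. -/
theorem IsAllocation.update_insert {Y : Fin n → Finset I} (hY : IsAllocation Y) {v : Fin n}
    {e : I} (he : ∀ i, i ≠ v → e ∉ Y i) :
    IsAllocation (Function.update Y v (insert e (Y v))) := by
  intro i j hij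
  by_cases hi : i = v
  · subst hi
    rw [Function.update_self, Function.update_of_ne hij.symm, Finset.disjoint_insert_left]
    exact ⟨he j hij.symm, hY i j hij⟩
  · by_cases hj : j = v
    · subst hj
      rw [Function.update_self, Function.update_of_ne hij, Finset.disjoint_insert_right]
      exact ⟨he i hij, hY i j hij⟩
    · rw [Function.update_of_ne hi, Function.update_of_ne hj]
      exact hY i j hij

theorem IsAllocation.of_subset {Y Z : Fin n → Finset I} (hY : IsAllocation Y)
    (h : ∀ i, Z i ⊆ Y i) : IsAllocation Z :=
  fun i j hij => Finset.disjoint_of_subset_left (h i)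
    (Finset.disjoint_of_subset_right (h j) (hY i j hij))

/-- Exchange property of the size vectors of independent allocations: if `X` gives `v` more
than `Y` does, then `v` can gain one unit starting from `Y`, either for free or at the expense
of one unit of an agent `j` to whom `Y` gives more than `X` does. -/
theorem exists_exchange {f : Fin n → Finset I → ℕ} (hf : ∀ i, IsMRF (f i))
    {X : Fin n → Finset I} (hX : IsAllocation X) (hXi : IsIndependent f X)
    {Y : Fin n → Finset I} (hY : IsAllocation Y) (hYi : IsIndependent f Y)
    {v : Fin n} (hv : (Y v).card < (X v).card) :
    ∃ Z : Fin n → Finset I, IsAllocation Z ∧ IsIndependent f Z ∧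
      ((∀ i, (Z i).card = (Y i).card + if i = v then 1 else 0) ∨
        ∃ j, (X j).card < (Y j).card ∧
          ∀ i, (Z i).card + (if i = j then 1 else 0) =
            (Y i).card + if i = v then 1 else 0) := by
  induction hm : ∑ i, (X i \ Y i).card using Nat.strong_induction_on generalizing Y v with
  | _ m ih =>
  obtain ⟨e, heX, heY, hins⟩ := (hf v).exists_augment (hXi v) (hYi v) hv
  by_cases hfree : ∀ i, i ≠ v → e ∉ Y i
  · refine ⟨_, hY.update_insert hfree, fun i => ?_, Or.inl fun i => ?_⟩
    · by_cases hi : i = v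
      · subst hi; simpa using hins
      · simpa [Function.update_of_ne hi] using hYi i
    · by_cases hi : i = v
      · subst hi; simp [Finset.card_insert_of_notMem heY]
      · simp [hi]
  push Not at hfree
  obtain ⟨j, hjv, hej⟩ := hfree
  have heZ : ∀ i, i ≠ v → e ∉ (Y i).erase e := fun i _ => Finset.notMem_erase e _
  set Z : Fin n → Finset I :=
    Function.update (fun i => (Y i).erase e) v (insert e ((Y v).erase e)) with hZdef
  have hZ : IsAllocation Z :=
    IsAllocation.update_insert (hY.of_subset fun i => Finset.erase_subset e (Y i)) heZ
  have hZv : Z v = insert e (Y v) := by simp [hZdef, Finset.erase_eq_of_notMem heY]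
  have hZne : ∀ i, i ≠ v → Z i = (Y i).erase e := fun i hi => by
    simp [hZdef, Function.update_of_ne hi]
  have hZi : IsIndependent f Z := by
    intro i
    by_cases hi : i = v
    · subst hi; rw [hZv, hins]
    · rw [hZne i hi]
      exact (hf i).eq_card_of_subset (hYi i) (Finset.erase_subset e (Y i))
  have hcard : ∀ i, (Z i).card + (if i = j then 1 else 0) =
      (Y i).card + if i = v then 1 else 0 := by
    intro i
    by_cases hi : i = v
    · subst hi
      simp [hZv, Finset.card_insert_of_notMem heY, hjv.symm]
    · rw [hZne i hi]
      by_cases hij : i = j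
      · subst hij
        simp [Finset.card_erase_add_one hej, hi]
      · have : e ∉ Y i := fun hei => Finset.disjoint_left.mp (hY i j hij) hei hej
        simp [hij, hi, Finset.erase_eq_of_notMem this]
  by_cases hlt : (X j).card < (Y j).card
  · exact ⟨Z, hZ, hZi, Or.inr ⟨j, hlt, hcard⟩⟩
  have hZj : (Z j).card < (X j).card := by
    have := hcard j
    simp only [if_true, if_neg hjv] at this
    omega
  have hmeasure : ∑ i, (X i \ Z i).card < m := by
    rw [← hm]
    refine Finset.sum_lt_sum (fun i _ => Finset.card_le_card fun a ha => ?_)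
      ⟨v, Finset.mem_univ v, Finset.card_lt_card ?_⟩
    · rw [Finset.mem_sdiff] at ha ⊢
      refine ⟨ha.1, fun haY => ha.2 ?_⟩
      by_cases hi : i = v
      · subst hi; rw [hZv]; exact Finset.mem_insert_of_mem haY
      · rw [hZne i hi]
        refine Finset.mem_erase.mpr ⟨?_, haY⟩
        rintro rfl
        exact Finset.disjoint_left.mp (hX i v hi) ha.1 heX
    · rw [hZv, Finset.ssubset_iff_of_subset
        (Finset.sdiff_subset_sdiff subset_rfl (Finset.subset_insert e (Y v)))]
      exact ⟨e, by simp [heX, heY], by simp⟩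
  obtain ⟨W, hW, hWi, hWc | ⟨k, hk, hWc⟩⟩ := ih _ hmeasure hZ hZi hZj rfl
  · exact ⟨W, hW, hWi, Or.inl fun i => (hWc i).trans (hcard i)⟩
  · refine ⟨W, hW, hWi, Or.inr ⟨k, ?_, fun i => (hWc i).trans (hcard i)⟩⟩
    have hck := hcard k
    by_cases hkv : k = v
    · subst hkv
      simp only [if_neg hjv.symm, if_true] at hck
      omega
    · simp only [if_neg hkv] at hck
      omega

/-- The hinge sum of a list bounds the sum of differences over each initial segment. -/
theorem List.sum_take_map_sub_le (c : ℝ) (l : List ℝ) (k : ℕ) :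
    ((l.take k).map fun x => c - x).sum ≤ (l.map fun x => max (c - x) 0).sum := by
  induction l generalizing k with
  | nil => simp
  | cons x l ih =>
    cases k with
    | zero =>
      simp only [List.take_zero, List.map_nil, List.sum_nil]
      apply List.sum_nonneg
      simp only [List.mem_map]
      rintro _ ⟨y, _, rfl⟩
      exact le_max_right _ _
    | succ k =>
      simp only [List.take_succ_cons, List.map_cons, List.sum_cons]
      exact add_le_add (le_max_left _ _) (ih k)

/-- In a sorted list, the hinge sum is attained by an initial segment. -/
theorem List.exists_sum_take_map_sub_eq (c : ℝ) {l : List ℝ} (hl : l.Pairwise (· ≤ ·)) :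
    ∃ k, ((l.take k).map fun x => c - x).sum = (l.map fun x => max (c - x) 0).sum := by
  induction l with
  | nil => exact ⟨0, by simp⟩
  | cons x l ih =>
    rw [List.pairwise_cons] at hl
    by_cases hx : x ≤ c
    · obtain ⟨k, hk⟩ := ih hl.2
      exact ⟨k + 1, by simp [hk, hx, -List.map_take]⟩
    · refine ⟨0, ?_⟩
      have hzero : ∀ y ∈ (x :: l).map fun x => max (c - x) 0, y = 0 := by
        simp only [List.mem_map]
        rintro _ ⟨y, hy, rfl⟩
        have hxy : x ≤ y := by
          rcases List.mem_cons.mp hy with rfl | hy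
          · exact le_rfl
          · exact hl.1 y hy
        exact max_eq_right (by linarith)
      rw [List.sum_eq_zero hzero]
      simp

theorem List.sum_map_const_sub (c : ℝ) (l : List ℝ) :
    (l.map fun x => c - x).sum = l.length * c - l.sum := by
  induction l with
  | nil => simp
  | cons x l ih =>
    simp only [List.map_cons, List.sum_cons, ih, List.length_cons]
    push_cast
    ring

theorem length_sortedVec (u : Fin n → ℝ) : (sortedVec u).length = n := by
  simp [sortedVec]

theorem sum_map_sortedVec (u : Fin n → ℝ) (g : ℝ → ℝ) :
    ((sortedVec u).map g).sum = ∑ i, g (u i) := by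
  have h : ((sortedVec u : List ℝ) : Multiset ℝ) = Finset.univ.val.map u :=
    Multiset.sort_eq _ _
  rw [← Multiset.sum_coe, ← Multiset.map_coe, h, Multiset.map_map]
  rfl

theorem LorenzGE.sum_le {u w : Fin n → ℝ} (h : LorenzGE u w) : ∑ i, w i ≤ ∑ i, u i := by
  have hn := h n
  rw [List.take_of_length_le (length_sortedVec w).le,
    List.take_of_length_le (length_sortedVec u).le] at hn
  have hsum : ∀ u : Fin n → ℝ, (sortedVec u).sum = ∑ i, u i := fun u => by
    simpa using sum_map_sortedVec u id
  rwa [hsum, hsum] at hn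

/-- Lorenz dominance implies dominance for hinge functions. -/
theorem LorenzGE.sum_max_sub_le {u w : Fin n → ℝ} (h : LorenzGE u w) (c : ℝ) :
    ∑ i, max (c - u i) 0 ≤ ∑ i, max (c - w i) 0 := by
  have hsorted : (sortedVec u).Pairwise (· ≤ ·) := Multiset.pairwise_sort _ _
  obtain ⟨k, hk⟩ := List.exists_sum_take_map_sub_eq c hsorted
  have hw := List.sum_take_map_sub_le c (sortedVec w) k
  rw [sum_map_sortedVec u fun x => max (c - x) 0] at hk
  rw [sum_map_sortedVec w fun x => max (c - x) 0] at hw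
  rw [List.sum_map_const_sub, List.length_take, length_sortedVec] at hk hw
  linarith [h k]

/-- If a unit transfer from `j` to `v` turns `u` into a vector that `u` Lorenz-dominates, then
`j` exceeded `v` by at most one unit. -/
theorem LorenzGE.le_add_one_of_transfer {u w : Fin n → ℝ} (h : LorenzGE u w) {j v : Fin n}
    (hjv : j ≠ v)
    (hw : ∀ i, w i + (if i = j then 1 else 0) = u i + if i = v then 1 else 0) :
    u j ≤ u v + 1 := by
  by_contra! hlt
  have hsum := h.sum_max_sub_le (u j - 1)
  refine hsum.not_gt (Finset.sum_lt_sum (fun i _ => ?_) ⟨v, Finset.mem_univ v, ?_⟩)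
  · have hi := hw i
    by_cases hij : i = j
    · subst hij
      simp only [if_true, if_neg hjv] at hi
      rw [max_eq_right (by linarith)]
      exact le_max_right _ _
    · simp only [if_neg hij] at hi
      refine max_le_max_right 0 ?_
      split_ifs at hi <;> linarith
  · have hv := hw v
    simp only [if_true, if_neg hjv.symm] at hv
    rw [lt_max_iff, max_lt_iff]
    left
    constructor <;> linarith

theorem SigmaLorenzDom.not_exists_gain {σ : Equiv.Perm (Fin n)} {f : Fin n → Finset I → ℕ}
    {A Z : Fin n → Finset I} (h : SigmaLorenzDom σ f A) (hZ : IsAllocation Z) (v : Fin n) :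
    ¬ ∀ i, f i (Z i) = f i (A i) + if i = v then 1 else 0 := by
  intro hgain
  have hsum := (h Z hZ).sum_le
  simp only [pUtil, hgain] at hsum
  refine hsum.not_gt (Finset.sum_lt_sum (fun i _ => ?_) ⟨v, Finset.mem_univ v, ?_⟩)
  · split_ifs <;> simp
  · simp

theorem SigmaLorenzDom.pUtil_le_add_one {σ : Equiv.Perm (Fin n)} {f : Fin n → Finset I → ℕ}
    {A Z : Fin n → Finset I} (h : SigmaLorenzDom σ f A) (hZ : IsAllocation Z) {j v : Fin n}
    (hjv : j ≠ v)
    (hgain : ∀ i, f i (Z i) + (if i = j then 1 else 0) =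
      f i (A i) + if i = v then 1 else 0) :
    pUtil σ f A j ≤ pUtil σ f A v + 1 := by
  refine (h Z hZ).le_add_one_of_transfer hjv fun i => ?_
  have hi : ((f i (Z i) + (if i = j then 1 else 0) : ℕ) : ℝ) =
      ((f i (A i) + (if i = v then 1 else 0) : ℕ) : ℝ) := by rw [hgain i]
  push_cast at hi
  simp only [pUtil]
  linarith

/-- Distinct agents never have perturbed utilities that differ by exactly one. -/
theorem pUtil_ne_add_one (σ : Equiv.Perm (Fin n)) (f : Fin n → Finset I → ℕ)
    (A : Fin n → Finset I) {j v : Fin n} (hjv : j ≠ v) :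
    pUtil σ f A j ≠ pUtil σ f A v + 1 := by
  intro h
  have hn : 0 < n := j.pos
  have hn0 : (n : ℝ) ≠ 0 := by positivity
  simp only [pUtil] at h
  field_simp at h
  have hint : (((f v (A v) : ℤ) + 1 - f j (A j)) * (n : ℤ) ^ 2) =
      ((σ j : ℕ) : ℤ) - ((σ v : ℕ) : ℤ) := by
    have : ((((f v (A v) : ℤ) + 1 - f j (A j)) * (n : ℤ) ^ 2 : ℤ) : ℝ) =
        ((((σ j : ℕ) : ℤ) - ((σ v : ℕ) : ℤ) : ℤ) : ℝ) := by
      push_cast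
      linarith
    exact_mod_cast this
  have hj := (σ j).isLt
  have hv := (σ v).isLt
  have hsq : (n : ℤ) ≤ (n : ℤ) ^ 2 := by nlinarith
  have hzero : ((σ j : ℕ) : ℤ) - ((σ v : ℕ) : ℤ) = 0 :=
    Int.eq_zero_of_abs_lt_dvd (Dvd.intro_left _ hint) (by rw [abs_lt]; constructor <;> omega)
  exact hjv (σ.injective (Fin.ext (by omega)))

/-- Strong faithfulness of the prioritized egalitarian mechanism: if agent `v` restricts
her report to a subset `S` of the bundle `A v` she receives, then in every non-redundant
σ-Lorenz dominating allocation for the new profile she receives exactly `S`. -/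
theorem PE_strongly_faithful
    {n : ℕ} {I : Type*} [DecidableEq I] [Fintype I]
    (σ : Equiv.Perm (Fin n))
    (f : Fin n → Finset I → ℕ) (hf : ∀ i, IsMRF (f i))
    (A : Fin n → Finset I) (hA : IsAllocation A)
    (hNR : NonRedundant f A) (hLD : SigmaLorenzDom σ f A)
    (v : Fin n) (S : Finset I) (hS : S ⊆ A v)
    (A' : Fin n → Finset I) (hA' : IsAllocation A')
    (hNR' : NonRedundant (Function.update f v (restrictVal (f v) S)) A')
    (hLD' : SigmaLorenzDom σ (Function.update f v (restrictVal (f v) S)) A') :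
    A' v = S := by
  set g := Function.update f v (restrictVal (f v) S) with hg
  have hgv : g v = restrictVal (f v) S := Function.update_self ..
  have hgne : ∀ i, i ≠ v → g i = f i := fun i hi => Function.update_of_ne hi ..
  have hgM : ∀ i, IsMRF (g i) := by
    intro i
    by_cases hi : i = v
    · subst hi; rw [hgv]; exact (hf i).restrictVal S
    · rw [hgne i hi]; exact hf i
  have hAi : IsIndependent f A := hNR.isIndependent hf
  have hAi' : IsIndependent g A' := hNR'.isIndependent hgM
  have hsub : A' v ⊆ S := by
    intro a ha
    by_contra haS
    have := hNR' v a ha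
    rw [hgv, restrictVal, restrictVal, Finset.erase_inter,
      Finset.erase_eq_of_notMem fun h => haS (Finset.mem_inter.mp h).2] at this
    exact lt_irrefl _ this
  have hAf' : IsIndependent f A' := by
    intro i
    have := hAi' i
    by_cases hi : i = v
    · subst hi
      rwa [hgv, restrictVal, Finset.inter_eq_left.mpr hsub] at this
    · rwa [hgne i hi] at this
  by_contra hne
  have hcardv : (A' v).card < S.card := Finset.card_lt_card (hsub.ssubset_of_ne hne)
  set B := Function.update A v S with hBdef
  have hBv : B v = S := Function.update_self ..
  have hBne : ∀ i, i ≠ v → B i = A i := fun i hi => Function.update_of_ne hi ..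
  have hBA : ∀ i, B i ⊆ A i := by
    intro i
    by_cases hi : i = v
    · subst hi; rwa [hBv]
    · rw [hBne i hi]
  have hB : IsAllocation B := hA.of_subset hBA
  have hBi : IsIndependent g B := by
    intro i
    by_cases hi : i = v
    · subst hi
      rw [hgv, hBv, restrictVal, Finset.inter_self]
      exact (hf i).eq_card_of_subset (hAi i) hS
    · rw [hgne i hi, hBne i hi]
      exact hAi i
  obtain ⟨w, hw, hmin⟩ := Finset.exists_min_image
    (Finset.univ.filter fun i => (A' i).card < (B i).card) (pUtil σ g A')
    ⟨v, by simpa [hBv] using hcardv⟩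
  simp only [Finset.mem_filter, Finset.mem_univ, true_and] at hw hmin
  obtain ⟨Z, hZ, hZi, hZc | ⟨j, hj, hZc⟩⟩ := exists_exchange hgM hB hBi hA' hAi' hw
  · exact hLD'.not_exists_gain hZ w fun i => by rw [hZi i, hAi' i, hZc i]
  have hjw : j ≠ w := by rintro rfl; omega
  have hjv : j ≠ v := by rintro rfl; rw [hBv] at hj; omega
  have hle' := hLD'.pUtil_le_add_one hZ hjw fun i => by rw [hZi i, hAi' i, hZc i]
  rw [hBne j hjv] at hj
  obtain ⟨W, hW, hWi, hWc | ⟨k, hk, hWc⟩⟩ := exists_exchange hf hA' hAf' hA hAi hj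
  · exact hLD.not_exists_gain hW j fun i => by rw [hWi i, hAi i, hWc i]
  have hkj : k ≠ j := by rintro rfl; omega
  have hle := hLD.pUtil_le_add_one hW hkj fun i => by rw [hWi i, hAi i, hWc i]
  have hkB : (A' k).card < (B k).card := by
    by_cases hkv : k = v
    · subst hkv; rwa [hBv]
    · rwa [hBne k hkv]
  have hmink := hmin k hkB
  have hlt := lt_of_le_of_ne hle (pUtil_ne_add_one σ f A hkj)
  have hjR : ((A j).card : ℝ) + 1 ≤ (A' j).card := by exact_mod_cast hj
  have hkR : ((A' k).card : ℝ) + 1 ≤ (A k).card := by exact_mod_cast hk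
  simp only [pUtil, hAi _, hAi' _] at hle' hmink hlt
  linarith
end

section
/- Let 0 < ε < 1/3 and let M be a set of three items. There is no deterministic allocation mechanism Mech, mapping each pair (f_1, f_2) of ε-leveled valuations on M to an allocation, satisfying all of the following: (i) Mech is truthful: for every agent i ∈ {1,2}, every pair (f_1,f_2) of ε-leveled valuations, and every ε-leveled deviation f'_i, agent i's true value for her bundle under the profile with f'_i replacing f_i is at most her true value for her bundle under (f_1,f_2); (ii) for every pair of reports, the welfare of the output allocation is at least 1/(1+ε) times the maximum welfare over all allocations; and (iii) for every pair of reports, every agent whose demand set has size exactly two receives at least one item from her demand set. -/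
open Finset
open scoped Classical

variable {n : ℕ} {I : Type*} [DecidableEq I] [Fintype I]

/-- An ε-leveled valuation on the items, given by its vector of item values:
each item is worth either 0 or some value in `[1, 1+ε]`, and values are additive. -/
def EpsLeveled (ε : ℝ) {m : ℕ} (w : Fin m → ℝ) : Prop :=
  ∀ a : Fin m, w a = 0 ∨ (1 ≤ w a ∧ w a ≤ 1 + ε)

namespace LeveledMechanism

/-- The bundle that the assignment `o` of items to owners gives to agent `i`. -/
def bundle (o : Fin 3 → Option (Fin 2)) (i : Fin 2) : Finset (Fin 3) :=
  Finset.univ.filter fun a => o a = some i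

theorem isAllocation_bundle (o : Fin 3 → Option (Fin 2)) : IsAllocation (bundle o) := by
  intro i j hij
  rw [Finset.disjoint_left]
  intro a hi hj
  simp only [bundle, Finset.mem_filter, Finset.mem_univ, true_and] at hi hj
  exact hij (Option.some.inj (hi.symm.trans hj))

theorem exists_bundle_eq {A : Fin 2 → Finset (Fin 3)} (hA : IsAllocation A) :
    ∃ o : Fin 3 → Option (Fin 2), A = bundle o := by
  refine ⟨fun a => if a ∈ A 0 then some 0 else if a ∈ A 1 then some 1 else none, ?_⟩
  have h01 := Finset.disjoint_left.1 (hA 0 1 (by decide))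
  funext i
  ext a
  have := @h01 a
  fin_cases i <;> by_cases h0 : a ∈ A 0 <;> by_cases h1 : a ∈ A 1 <;> simp_all [bundle]

/-- The contribution to welfare of an item held by the given owner, where `v i` is its value
to agent `i`. -/
def contribution (v : Fin 2 → ℝ) : Option (Fin 2) → ℝ
  | none => 0
  | some i => v i

theorem welfare_bundle (F : Fin 2 → Fin 3 → ℝ) (o : Fin 3 → Option (Fin 2)) :
    ∑ i, ∑ a ∈ bundle o i, F i a = ∑ a, contribution (fun i => F i a) (o a) := by
  simp only [bundle, Finset.sum_filter]
  rw [Finset.sum_comm]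
  refine Finset.sum_congr rfl fun a _ => ?_
  rcases o a with _ | j
  · simp [contribution]
  · simp [contribution]

/-- The valuation that encodes the levels `0`, `1`, `2` as the values `0`, `1`, `1 + ε`. -/
noncomputable def levelValue (ε : ℝ) (l : Fin 3) : ℝ := ![0, 1, 1 + ε] l

/-- Integer surrogates for the level values, ordering bundles in the same way. -/
def levelWeight (l : Fin 3) : ℕ := ![0, 3, 4] l

/-- The level-weight that agent `i` with levels `r` obtains from the assignment `o`. -/
def gain (r : Fin 3 → Fin 3) (o : Fin 3 → Option (Fin 2)) (i : Fin 2) : ℕ :=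
  (if o 0 = some i then levelWeight (r 0) else 0) +
    (if o 1 = some i then levelWeight (r 1) else 0) +
    (if o 2 = some i then levelWeight (r 2) else 0)

theorem epsLeveled_levelValue {ε : ℝ} (hε0 : 0 < ε) (r : Fin 3 → Fin 3) :
    EpsLeveled ε fun a => levelValue ε (r a) := by
  intro a
  change levelValue ε (r a) = 0 ∨ 1 ≤ levelValue ε (r a) ∧ levelValue ε (r a) ≤ 1 + ε
  generalize r a = l
  fin_cases l <;> simp [levelValue, hε0.le]

theorem exists_gain_eq (ε : ℝ) (r : Fin 3 → Fin 3) (o : Fin 3 → Option (Fin 2)) (i : Fin 2) :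
    ∃ k j : ℕ, j ≤ 3 ∧ gain r o i = 3 * k + j ∧
      ∑ a ∈ bundle o i, levelValue ε (r a) = k + j * ε := by
  have item : ∀ a, ∃ k j : ℕ, j ≤ 1 ∧
      (if o a = some i then levelWeight (r a) else 0) = 3 * k + j ∧
      (if o a = some i then levelValue ε (r a) else 0) = k + j * ε := by
    intro a
    split_ifs
    · generalize r a = l
      fin_cases l
      · exact ⟨0, 0, by simp [levelWeight, levelValue]⟩
      · exact ⟨1, 0, by simp [levelWeight, levelValue]⟩
      · exact ⟨1, 1, by simp [levelWeight, levelValue]⟩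
    · exact ⟨0, 0, by simp⟩
  choose k j hj hw hv using item
  refine ⟨k 0 + k 1 + k 2, j 0 + j 1 + j 2, ?_, ?_, ?_⟩
  · have := hj 0; have := hj 1; have := hj 2; omega
  · rw [gain, hw, hw, hw]; ring
  · rw [bundle, Finset.sum_filter, Fin.sum_univ_three, hv, hv, hv]; push_cast; ring

theorem gain_le_gain {ε : ℝ} (hε0 : 0 < ε) (hε : ε < 1 / 3) {r : Fin 3 → Fin 3}
    {o u : Fin 3 → Option (Fin 2)} {i : Fin 2}
    (h : ∑ a ∈ bundle u i, levelValue ε (r a) ≤ ∑ a ∈ bundle o i, levelValue ε (r a)) :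
    gain r u i ≤ gain r o i := by
  obtain ⟨k, j, hj, hg, hs⟩ := exists_gain_eq ε r u i
  obtain ⟨k', j', hj', hg', hs'⟩ := exists_gain_eq ε r o i
  rw [hs, hs'] at h
  rw [hg, hg']
  have hjR : (j' : ℝ) ≤ 3 := by exact_mod_cast hj'
  rcases lt_trichotomy k k' with hk | rfl | hk
  · omega
  · have : (j : ℝ) ≤ j' := le_of_mul_le_mul_right (by linarith) hε0
    have : j ≤ j' := by exact_mod_cast this
    omega
  · have hkR : (k' : ℝ) + 1 ≤ k := by exact_mod_cast hk
    have : (0 : ℝ) ≤ j * ε := by positivity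
    nlinarith

/-- If somebody demands the item `a`, then it is owned by an agent who demands it. -/
def Efficient (p : Fin 2 → Fin 3 → Fin 3) (a : Fin 3) : Option (Fin 2) → Prop
  | none => ∀ j, p j a = 0
  | some i => p i a = 0 → ∀ j, p j a = 0

instance (p : Fin 2 → Fin 3 → Fin 3) (a : Fin 3) : DecidablePred (Efficient p a)
  | none => inferInstanceAs (Decidable (∀ j, p j a = 0))
  | some i => inferInstanceAs (Decidable (p i a = 0 → ∀ j, p j a = 0))

theorem efficient_of_welfare {ε : ℝ} (hε0 : 0 < ε) (hε : ε < 1 / 3)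
    (p : Fin 2 → Fin 3 → Fin 3) (o : Fin 3 → Option (Fin 2))
    (h : ∀ B : Fin 2 → Finset (Fin 3), IsAllocation B →
      ∑ i, ∑ a ∈ B i, levelValue ε (p i a) ≤
        (1 + ε) * ∑ i, ∑ a ∈ bundle o i, levelValue ε (p i a)) (a : Fin 3) :
    Efficient p a (o a) := by
  by_contra hne
  have wasted : contribution (fun i => levelValue ε (p i a)) (o a) = 0 ∧ ∃ j, p j a ≠ 0 := by
    rcases ho : o a with _ | i <;> simp only [ho, Efficient] at hne
    · exact ⟨rfl, not_forall.1 hne⟩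
    · obtain ⟨hi, hj⟩ := Classical.not_imp.1 hne
      exact ⟨by simp [contribution, hi, levelValue], not_forall.1 hj⟩
  obtain ⟨h0, j, hj⟩ := wasted
  have hle : ∀ b, contribution (fun i => levelValue ε (p i b)) (o b) ≤ 1 + ε := by
    intro b
    rcases o b with _ | i
    · simp only [contribution]; linarith
    · simp only [contribution]
      generalize p i b = l
      fin_cases l <;> simp [levelValue] <;> linarith
  have hge : 1 ≤ levelValue ε (p j a) := by
    generalize p j a = l at hj
    fin_cases l <;> simp_all [levelValue, hε0.le]
  have key := h _ (isAllocation_bundle (Function.update o a (some j)))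
  rw [welfare_bundle (fun i b => levelValue ε (p i b)),
    welfare_bundle (fun i b => levelValue ε (p i b)),
    ← Finset.add_sum_erase _ _ (Finset.mem_univ a),
    ← Finset.add_sum_erase _ _ (Finset.mem_univ a), h0, Function.update_self,
    Finset.sum_congr rfl fun b hb => by
      rw [Function.update_of_ne (Finset.ne_of_mem_erase hb)]] at key
  have hsum := Finset.sum_le_card_nsmul (Finset.univ.erase a) _ _ fun b _ => hle b
  rw [Finset.card_erase_of_mem (Finset.mem_univ a), Finset.card_univ, Fintype.card_fin,
    two_nsmul] at hsum
  change levelValue ε (p j a) + _ ≤ _ at key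
  nlinarith

/-- The assignment `o` wastes no item and gives every agent demanding exactly two items
one of them. -/
def Admissible (p : Fin 2 → Fin 3 → Fin 3) (o : Fin 3 → Option (Fin 2)) : Prop :=
  (∀ a, Efficient p a (o a)) ∧
    ∀ i, (Finset.univ.filter fun a => p i a ≠ 0).card = 2 → ∃ a, o a = some i ∧ p i a ≠ 0

instance (p : Fin 2 → Fin 3 → Fin 3) : DecidablePred (Admissible p) :=
  fun _ => inferInstanceAs (Decidable (_ ∧ _))

/-- No agent gains by switching from `x` to `y`, if only her own report differs. -/
def NoGain (x y : (Fin 2 → Fin 3 → Fin 3) × (Fin 3 → Option (Fin 2))) : Prop :=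
  ∀ i, x.1 (1 - i) = y.1 (1 - i) → gain (x.1 i) y.2 i ≤ gain (x.1 i) x.2 i

instance (x y : (Fin 2 → Fin 3 → Fin 3) × (Fin 3 → Option (Fin 2))) : Decidable (NoGain x y) :=
  inferInstanceAs (Decidable (∀ _, _))

/-- All the assignments of the three items. -/
def assignments : List (Fin 3 → Option (Fin 2)) :=
  [none, some 0, some 1].flatMap fun a => [none, some 0, some 1].flatMap fun b =>
    [none, some 0, some 1].map fun c => ![a, b, c]

theorem mem_assignments (o : Fin 3 → Option (Fin 2)) : o ∈ assignments := by
  revert o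
  decide

/-- Backtracking search: can the outcomes fixed in `acc` be extended to the profiles in the list
so that all outcomes are admissible and no agent gains from misreporting? -/
def extendable : List (Fin 2 → Fin 3 → Fin 3) →
    List ((Fin 2 → Fin 3 → Fin 3) × (Fin 3 → Option (Fin 2))) → Bool
  | [], _ => true
  | p :: ps, acc => assignments.any fun o =>
      decide (Admissible p o) &&
        (acc.all fun x => decide (NoGain x (p, o)) && decide (NoGain (p, o) x)) &&
        extendable ps ((p, o) :: acc)

theorem extendable_of_mechanism (m : (Fin 2 → Fin 3 → Fin 3) → Fin 3 → Option (Fin 2))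
    (hadm : ∀ p, Admissible p (m p)) (htruth : ∀ p q, NoGain (p, m p) (q, m q))
    (ps : List (Fin 2 → Fin 3 → Fin 3))
    (acc : List ((Fin 2 → Fin 3 → Fin 3) × (Fin 3 → Option (Fin 2))))
    (hacc : ∀ x ∈ acc, x.2 = m x.1) : extendable ps acc = true := by
  induction ps generalizing acc with
  | nil => rfl
  | cons p ps ih =>
    refine List.any_eq_true.2 ⟨m p, mem_assignments _, ?_⟩
    simp only [Bool.and_eq_true, decide_eq_true_eq, List.all_eq_true]
    refine ⟨⟨hadm p, fun x hx => ?_⟩, ih _ ?_⟩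
    · obtain ⟨q, o⟩ := x
      obtain rfl : o = m q := hacc _ hx
      exact ⟨htruth _ _, htruth _ _⟩
    · rintro x (_ | ⟨_, hx⟩)
      · rfl
      · exact hacc x hx

/-- A family of profiles on which no truthful choice of admissible outcomes exists. -/
def conflictingProfiles : List (Fin 2 → Fin 3 → Fin 3) :=
  [![![2, 0, 1], ![0, 2, 1]], ![![2, 0, 1], ![1, 1, 2]], ![![2, 1, 0], ![1, 1, 2]],
    ![![2, 1, 0], ![0, 2, 1]], ![![2, 1, 2], ![1, 1, 2]], ![![2, 1, 2], ![2, 0, 1]],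
    ![![0, 2, 1], ![2, 0, 1]], ![![0, 2, 1], ![1, 1, 2]], ![![1, 2, 2], ![0, 2, 1]],
    ![![0, 2, 1], ![0, 2, 1]], ![![2, 1, 2], ![2, 1, 1]], ![![2, 0, 1], ![2, 1, 1]],
    ![![2, 0, 1], ![1, 2, 0]], ![![2, 1, 0], ![1, 2, 0]]]

theorem not_extendable_conflictingProfiles : extendable conflictingProfiles [] = false := by
  decide +kernel

end LeveledMechanism

/-- There is no deterministic truthful allocation mechanism for two ε-leveled agents
and three items that always obtains a `1/(1+ε)` fraction of the maximum welfare and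
gives every agent who demands exactly two items at least one of them. -/
theorem no_deterministic_truthful_fair_leveled (ε : ℝ) (hε0 : 0 < ε) (hε : ε < 1 / 3) :
    ¬ ∃ Mech : (Fin 2 → Fin 3 → ℝ) → (Fin 2 → Finset (Fin 3)),
      -- the mechanism outputs allocations
      (∀ F : Fin 2 → Fin 3 → ℝ, (∀ i, EpsLeveled ε (F i)) →
        IsAllocation (Mech F)) ∧
      -- (i) truthfulness
      (∀ F : Fin 2 → Fin 3 → ℝ, (∀ j, EpsLeveled ε (F j)) →
        ∀ i : Fin 2, ∀ w' : Fin 3 → ℝ, EpsLeveled ε w' →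
          ∑ a ∈ Mech (Function.update F i w') i, F i a ≤ ∑ a ∈ Mech F i, F i a) ∧
      -- (ii) welfare at least a 1/(1+ε) fraction of the maximum welfare
      (∀ F : Fin 2 → Fin 3 → ℝ, (∀ j, EpsLeveled ε (F j)) →
        ∀ B : Fin 2 → Finset (Fin 3), IsAllocation B →
          ∑ i, ∑ a ∈ B i, F i a ≤ (1 + ε) * ∑ i, ∑ a ∈ Mech F i, F i a) ∧
      -- (iii) an agent whose demand set has size two gets at least one demanded item
      (∀ F : Fin 2 → Fin 3 → ℝ, (∀ j, EpsLeveled ε (F j)) →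
        ∀ i : Fin 2, (Finset.univ.filter fun a => F i a ≠ 0).card = 2 →
          ∃ a ∈ Mech F i, F i a ≠ 0) := by
  open LeveledMechanism in
  rintro ⟨Mech, halloc, htruth, hwelfare, hfair⟩
  let F : (Fin 2 → Fin 3 → Fin 3) → Fin 2 → Fin 3 → ℝ := fun p i a => levelValue ε (p i a)
  have hF : ∀ p i, EpsLeveled ε (F p i) := fun p i => epsLeveled_levelValue hε0 (p i)
  choose m hm using fun p => exists_bundle_eq (halloc (F p) (hF p))
  have hlevel : ∀ l, levelValue ε l ≠ 0 ↔ l ≠ 0 := by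
    intro l
    fin_cases l <;> simp [levelValue]
    linarith
  have hadm : ∀ p, Admissible p (m p) := by
    refine fun p => ⟨fun a => ?_, fun i hi => ?_⟩
    · refine efficient_of_welfare hε0 hε p (m p) (fun B hB => ?_) a
      rw [← hm p]
      exact hwelfare (F p) (hF p) B hB
    · obtain ⟨a, ha, hne⟩ := hfair (F p) (hF p) i (by simpa only [F, hlevel] using hi)
      rw [hm p] at ha
      exact ⟨a, (Finset.mem_filter.1 ha).2, (hlevel _).1 hne⟩
  have hno : ∀ p q, NoGain (p, m p) (q, m q) := by
    intro p q i hpq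
    have hupd : Function.update (F p) i (F q i) = F q := by
      funext k
      rcases eq_or_ne k i with rfl | hk
      · simp
      · obtain rfl : k = 1 - i := by omega
        rw [Function.update_of_ne hk]
        simp only [F]
        rw [show p (1 - i) = q (1 - i) from hpq]
    have h := htruth (F p) (hF p) i (F q i) (hF q i)
    rw [hupd, hm p, hm q] at h
    exact gain_le_gain hε0 hε h
  have := extendable_of_mechanism m hadm hno conflictingProfiles [] (by simp)
  rw [not_extendable_conflictingProfiles] at this
  exact Bool.false_ne_true this
end

section
/- For every real number c with √3 − 1 < c ≤ 1 there exists a finite set M of items such that there is no deterministic truthful allocation mechanism for two agents with dichotomous XOS valuations on M whose output allocation always has welfare at least c times the maximum welfare over all allocations. -/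
open Finset
open scoped Classical

variable {n : ℕ} {I : Type*} [DecidableEq I] [Fintype I]

/-- The valuation counting the items of a bundle in the better of two target sets. -/
noncomputable def maxInterCard (A T : Finset I) (S : Finset I) : ℝ :=
  max ((S ∩ A).card : ℝ) ((S ∩ T).card : ℝ)

lemma isXOS_maxInterCard (A T : Finset I) : IsXOS (maxInterCard A T) := by
  refine ⟨1, ![fun a => if a ∈ A then 1 else 0, fun a => if a ∈ T then 1 else 0], ?_, ?_⟩
  · intro t a
    fin_cases t <;> simp <;> split_ifs <;> norm_num
  · intro S
    have h : ∀ B : Finset I, ((S ∩ B).card : ℝ) = ∑ a ∈ S, if a ∈ B then (1 : ℝ) else 0 := by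
      intro B
      rw [Finset.sum_boole, Finset.filter_mem_eq_inter]
    unfold maxInterCard
    rw [h A, h T]
    apply le_antisymm
    · apply max_le
      · exact Finset.le_sup' (fun t : Fin 2 => ∑ a ∈ S,
          (![fun a => if a ∈ A then (1 : ℝ) else 0, fun a => if a ∈ T then 1 else 0]
            : Fin 2 → I → ℝ) t a) (Finset.mem_univ 0)
      · exact Finset.le_sup' (fun t : Fin 2 => ∑ a ∈ S,
          (![fun a => if a ∈ A then (1 : ℝ) else 0, fun a => if a ∈ T then 1 else 0]
            : Fin 2 → I → ℝ) t a) (Finset.mem_univ 1)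
    · apply Finset.sup'_le
      intro t _
      fin_cases t
      · exact le_max_left _ _
      · exact le_max_right _ _

lemma isDichotomousR_maxInterCard (A T : Finset I) : IsDichotomousR (maxInterCard A T) := by
  intro S a
  have h : ∀ B : Finset I, (insert a S ∩ B).card = (S ∩ B).card ∨
      (insert a S ∩ B).card = (S ∩ B).card + 1 := by
    intro B
    by_cases hB : a ∈ B
    · rw [Finset.insert_inter_of_mem hB]
      by_cases hS : a ∈ S ∩ B
      · simp [Finset.insert_eq_of_mem hS]
      · simp [Finset.card_insert_of_notMem hS]
    · simp [Finset.insert_inter_of_notMem hB]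
  unfold maxInterCard
  norm_cast
  rcases h A with hA | hA <;> rcases h T with hT | hT <;> omega

lemma maxInterCard_self (X S : Finset I) : maxInterCard X X S = (S ∩ X).card := by
  simp [maxInterCard]

/-- If both agents first want only `X`, one of them gets more than `|T|` items of `X`. Reporting
that bundle and `T` as alternatives, it still gets the bundle, which blocks the other agent. -/
lemma no_truthful_of_disjoint (c : ℝ) (hc0 : 0 < c) (k t : ℕ)
    (hk : c < k * (c ^ 2 + 2 * c - 2)) (hck : ⌈c * k⌉₊ = t + 1)
    (X T : Finset I) (hX : X.card = 2 * k) (hT : T.card = t) (hXT : Disjoint X T)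
    (Mech : (Fin 2 → Finset I → ℝ) → (Fin 2 → Finset I))
    (halloc : ∀ F : Fin 2 → Finset I → ℝ,
      (∀ i, IsXOS (F i) ∧ IsDichotomousR (F i)) → IsAllocation (Mech F))
    (htruth : ∀ F : Fin 2 → Finset I → ℝ,
      (∀ i, IsXOS (F i) ∧ IsDichotomousR (F i)) →
      ∀ i : Fin 2, ∀ f' : Finset I → ℝ, IsXOS f' ∧ IsDichotomousR f' →
        F i (Mech (Function.update F i f') i) ≤ F i (Mech F i))
    (happrox : ∀ F : Fin 2 → Finset I → ℝ,
      (∀ i, IsXOS (F i) ∧ IsDichotomousR (F i)) →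
      ∀ B : Fin 2 → Finset I, IsAllocation B →
        c * (∑ i, F i (B i)) ≤ ∑ i, F i (Mech F i)) : False := by
  have hval : ∀ A B : Finset I, IsXOS (maxInterCard A B) ∧ IsDichotomousR (maxInterCard A B) :=
    fun A B => ⟨isXOS_maxInterCard A B, isDichotomousR_maxInterCard A B⟩
  let F : Fin 2 → Finset I → ℝ := fun _ => maxInterCard X X
  have hF : ∀ i, IsXOS (F i) ∧ IsDichotomousR (F i) := fun _ => hval X X
  obtain ⟨i, hi⟩ : ∃ i, t + 1 ≤ (Mech F i ∩ X).card := by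
    have h := happrox F hF ![X, ∅] (by
      intro i j hij
      fin_cases i <;> fin_cases j <;> simp_all)
    simp only [F, maxInterCard_self, Fin.sum_univ_two] at h
    simp only [Matrix.cons_val_zero, Matrix.cons_val_one, Finset.inter_self, hX,
      Finset.empty_inter, Finset.card_empty] at h
    by_contra! hlt
    have hceil : ∀ i, ((Mech F i ∩ X).card : ℝ) < c * k := fun i =>
      Nat.lt_ceil.mp (hck ▸ hlt i)
    have h0 := hceil 0
    have h1 := hceil 1
    push_cast at h
    simp only [F] at h0 h1
    linarith
  obtain ⟨A, hA, hAcard⟩ := Finset.exists_subset_card_eq hi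
  let G : Fin 2 → Finset I → ℝ := Function.update F i (maxInterCard A T)
  have hGi : G i = maxInterCard A T := Function.update_self ..
  have hGj : ∀ j, j ≠ i → G j = maxInterCard X X := fun j hj => Function.update_of_ne hj ..
  have hG : ∀ j, IsXOS (G j) ∧ IsDichotomousR (G j) := by
    intro j
    by_cases hj : j = i
    · rw [hj, hGi]; exact hval A T
    · rw [hGj j hj]; exact hval X X
  have hAM : A ⊆ Mech G i := by
    have h := htruth G hG i (F i) (hF i)
    have hback : Function.update G i (F i) = F := by simp [G]
    rw [hback, hGi] at h
    unfold maxInterCard at h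
    rw [Finset.inter_eq_right.mpr (hA.trans Finset.inter_subset_left), hAcard] at h
    norm_cast at h
    have hTle : (Mech G i ∩ T).card ≤ t := hT ▸ Finset.card_le_card Finset.inter_subset_right
    have hAle : A.card ≤ (Mech G i ∩ A).card := by omega
    exact Finset.inter_eq_right.mp (Finset.eq_of_subset_of_card_le Finset.inter_subset_right hAle)
  have hGival : G i (Mech G i) = t + 1 := by
    have hTle : (Mech G i ∩ T).card ≤ t := hT ▸ Finset.card_le_card Finset.inter_subset_right
    rw [hGi, maxInterCard, Finset.inter_eq_right.mpr hAM, hAcard]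
    norm_cast
    omega
  obtain ⟨j, hj, hsum⟩ : ∃ j, j ≠ i ∧ ∀ f : Fin 2 → ℝ, ∑ l, f l = f i + f j := by
    fin_cases i
    · exact ⟨1, by simp, fun f => by simp⟩
    · exact ⟨0, by simp, fun f => by simp [add_comm]⟩
  have hother : G j (Mech G j) + (t + 1) ≤ 2 * k := by
    have hdisj : Disjoint (Mech G j ∩ X) A :=
      (halloc G hG j i hj).mono Finset.inter_subset_left hAM
    have hle := Finset.card_le_card
      (Finset.union_subset Finset.inter_subset_right (hA.trans Finset.inter_subset_right) :
        Mech G j ∩ X ∪ A ⊆ X)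
    rw [Finset.card_union_of_disjoint hdisj, hAcard, hX] at hle
    rw [hGj j hj, maxInterCard_self]
    exact_mod_cast hle
  have h := happrox G hG (fun l => if l = i then T else X) (by
    intro l l' hll
    by_cases hl : l = i <;> by_cases hl' : l' = i
    · exact absurd (hl.trans hl'.symm) hll
    · simpa [hl, hl'] using hXT.symm
    · simpa [hl, hl'] using hXT
    · exfalso; omega)
  rw [hsum, hsum] at h
  simp only [if_neg hj, if_true] at h
  rw [hGival, hGi, hGj j hj, maxInterCard_self, Finset.inter_self, hX] at h
  rw [← hGj j hj] at h
  have hTval : (t : ℝ) ≤ maxInterCard A T T := by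
    rw [maxInterCard, Finset.inter_self, hT]
    exact le_max_right _ _
  have hck' : c * k ≤ t + 1 := by
    have := Nat.le_ceil (c * k)
    rw [hck] at this
    exact_mod_cast this
  push_cast at h
  nlinarith [mul_le_mul_of_nonneg_left hTval hc0.le, mul_le_mul_of_nonneg_left hck' hc0.le]

/-- For every `c` with `√3 − 1 < c ≤ 1` there is a finite item set on which no
deterministic truthful allocation mechanism for two dichotomous XOS agents always
achieves a `c` fraction of the maximum welfare. -/
theorem no_truthful_c_approx_dichotomous_XOS
    (c : ℝ) (hc1 : Real.sqrt 3 - 1 < c) (hc2 : c ≤ 1) :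
    ∃ m : ℕ,
      ¬ ∃ Mech : (Fin 2 → Finset (Fin m) → ℝ) → (Fin 2 → Finset (Fin m)),
        -- the mechanism outputs allocations
        (∀ F : Fin 2 → Finset (Fin m) → ℝ,
          (∀ i, IsXOS (F i) ∧ IsDichotomousR (F i)) → IsAllocation (Mech F)) ∧
        -- truthfulness
        (∀ F : Fin 2 → Finset (Fin m) → ℝ,
          (∀ i, IsXOS (F i) ∧ IsDichotomousR (F i)) →
          ∀ i : Fin 2, ∀ f' : Finset (Fin m) → ℝ, IsXOS f' ∧ IsDichotomousR f' →
            F i (Mech (Function.update F i f') i) ≤ F i (Mech F i)) ∧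
        -- c-approximation of the maximum welfare
        (∀ F : Fin 2 → Finset (Fin m) → ℝ,
          (∀ i, IsXOS (F i) ∧ IsDichotomousR (F i)) →
          ∀ B : Fin 2 → Finset (Fin m), IsAllocation B →
            c * (F 0 (B 0) + F 1 (B 1)) ≤ F 0 (Mech F 0) + F 1 (Mech F 1)) := by
  have hc0 : 0 < c := by
    have : (1 : ℝ) ≤ Real.sqrt 3 := Real.one_le_sqrt.mpr (by norm_num)
    linarith
  have hgap : 0 < c ^ 2 + 2 * c - 2 := by
    have h3 : Real.sqrt 3 ^ 2 = 3 := Real.sq_sqrt (by norm_num)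
    have h0 := Real.sqrt_nonneg 3
    nlinarith
  obtain ⟨k, hk⟩ := exists_nat_gt (c / (c ^ 2 + 2 * c - 2))
  rw [div_lt_iff₀ hgap] at hk
  have hk0 : (0 : ℝ) < k := by
    by_contra hneg
    nlinarith [mul_nonneg (sub_nonneg.mpr (not_lt.mp hneg)) hgap.le]
  obtain ⟨t, ht⟩ : ∃ t, ⌈c * k⌉₊ = t + 1 :=
    Nat.exists_eq_add_one.mpr (Nat.ceil_pos.mpr (mul_pos hc0 hk0))
  refine ⟨2 * k + t, ?_⟩
  rintro ⟨Mech, halloc, htruth, happrox⟩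
  let X : Finset (Fin (2 * k + t)) := Finset.univ.map (Fin.castAddEmb t)
  let T : Finset (Fin (2 * k + t)) := Finset.univ.map (Fin.natAddEmb (2 * k))
  have hX : X.card = 2 * k := by simp [X]
  have hT : T.card = t := by simp [T]
  have hXT : Disjoint X T := by
    rw [Finset.disjoint_left]
    intro a ha hb
    simp only [X, T, Finset.mem_map, Finset.mem_univ, true_and] at ha hb
    obtain ⟨x, rfl⟩ := ha
    obtain ⟨y, hy⟩ := hb
    have := congrArg Fin.val hy
    have := x.isLt
    simp at *
    omega
  exact no_truthful_of_disjoint c hc0 k t hk ht X T hX hT hXT Mech halloc htruth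
    (by simpa only [Fin.sum_univ_two] using happrox)
end

section
/- For every n ≥ 2 and every integer k ≥ 1 there exist dichotomous XOS valuations f_1,…,f_n for n agents on a finite item set M with |M| = n(k+1) + (n−1)k such that the maximum welfare over all allocations equals 2nk + n − k, while every EF1 allocation has welfare at most n(k+1). (Concretely, take pairwise disjoint sets S_1,…,S_n with |S_1| = n(k+1) and |S_j| = k for 2 ≤ j ≤ n, and let f_1(S) = |S ∩ S_1| and f_j(S) = max(|S ∩ S_1|, |S ∩ S_j|) for j ≥ 2.) -/
open Finset
open scoped Classical

variable {n : ℕ} {I : Type*} [DecidableEq I] [Fintype I]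

/-- With items coloured by `c`, the valuation of agent `j`: the larger of the number of items
of the common colour `z` and the number of items of colour `j`. -/
def colorVal {n : ℕ} {I : Type*} (c : I → Fin n) (z j : Fin n) (S : Finset I) : ℕ :=
  max #{a ∈ S | c a = z} #{a ∈ S | c a = j}

section colorVal

variable {n : ℕ} {I : Type*} (c : I → Fin n) (z : Fin n)

lemma colorVal_le_card (j : Fin n) (S : Finset I) : colorVal c z j S ≤ #S :=
  max_le (card_filter_le _ _) (card_filter_le _ _)

lemma isXOS_colorVal (j : Fin n) : IsXOS (fun S : Finset I => (colorVal c z j S : ℝ)) := by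
  refine ⟨1, fun t a => if c a = ![z, j] t then 1 else 0, fun t a => by positivity, fun S => ?_⟩
  have hu : (univ : Finset (Fin (1 + 1))) = {0, 1} := rfl
  simp [colorVal, hu]
  congr

lemma card_filter_insert_of_notMem [DecidableEq I] (p : I → Prop) [DecidablePred p] {S : Finset I}
    {a : I} (ha : a ∉ S) :
    #{b ∈ insert a S | p b} = #{b ∈ S | p b} + if p a then 1 else 0 := by
  rw [filter_insert]
  split_ifs <;> simp [ha]

lemma isDichotomousR_colorVal [DecidableEq I] (j : Fin n) :
    IsDichotomousR (fun S : Finset I => (colorVal c z j S : ℝ)) := by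
  intro S a
  beta_reduce
  norm_cast
  by_cases ha : a ∈ S
  · simp [ha]
  · unfold colorVal
    rw [card_filter_insert_of_notMem _ ha, card_filter_insert_of_notMem _ ha]
    split_ifs <;> omega

lemma sum_card_filter_le_of_isAllocation [Fintype I] {A : Fin n → Finset I}
    (hA : IsAllocation A) (p : I → Prop) [DecidablePred p] :
    ∑ i, #{a ∈ A i | p a} ≤ #{a | p a} := by
  rw [← card_biUnion fun i _ j _ hij => disjoint_filter_filter (hA i j hij)]
  exact card_le_card fun a => by simp

lemma sum_colorVal_le [Fintype I] {A : Fin n → Finset I} (hA : IsAllocation A) :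
    ∑ i, colorVal c z i (A i) ≤ Fintype.card I := by
  refine (sum_le_sum fun i _ => colorVal_le_card c z i (A i)).trans ?_
  simpa using sum_card_filter_le_of_isAllocation hA fun _ => True

lemma sum_colorVal_fiber [Fintype I] :
    ∑ i, colorVal c z i {a | c a = i} = Fintype.card I := by
  rw [← card_univ, card_eq_sum_card_fiberwise (f := c) (t := univ) (by simp)]
  refine sum_congr rfl fun i _ => ?_
  simp only [colorVal, filter_filter, and_self]
  exact max_eq_right (card_le_card (monotone_filter_right _ fun _ _ h => h.1))

/-- In an EF1 allocation every agent values its bundle at least at the number of items of the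
common colour in any other bundle, minus one. -/
lemma card_filter_le_colorVal_add_one [DecidableEq I] {A : Fin n → Finset I}
    (hEF : EF1 (fun i S => (colorVal c z i S : ℝ)) A) (i j : Fin n) :
    #{a ∈ A j | c a = z} ≤ colorVal c z i (A i) + 1 := by
  rcases hEF i j with h | ⟨e, -, h⟩
  · have h : colorVal c z i (A j) ≤ colorVal c z i (A i) := Nat.cast_le.mp h
    exact (le_max_left _ _).trans (h.trans (Nat.le_succ _))
  · have h : colorVal c z i ((A j).erase e) ≤ colorVal c z i (A i) := Nat.cast_le.mp h
    have h₁ : #{a ∈ (A j).erase e | c a = z} ≤ colorVal c z i (A i) := (le_max_left _ _).trans h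
    rw [filter_erase] at h₁
    have := pred_card_le_card_erase (s := {a ∈ A j | c a = z}) (a := e)
    omega

lemma sum_colorVal_le_of_EF1 [Fintype I] [DecidableEq I] {k : ℕ}
    (hz : #{a | c a = z} = n * (k + 1)) (hc : ∀ j ≠ z, #{a | c a = j} = k)
    {A : Fin n → Finset I} (hA : IsAllocation A)
    (hEF : EF1 (fun i S => (colorVal c z i S : ℝ)) A) :
    ∑ i, colorVal c z i (A i) ≤ n * (k + 1) := by
  have key (j : Fin n) (hj : k < colorVal c z j (A j)) :
      colorVal c z j (A j) = #{a ∈ A j | c a = z} := by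
    unfold colorVal at hj ⊢
    by_cases hjz : j = z
    · simp [hjz]
    · have : #{a ∈ A j | c a = j} ≤ #{a | c a = j} :=
        card_le_card (filter_subset_filter _ (subset_univ _))
      rw [hc j hjz] at this
      omega
  by_cases h : ∀ j, colorVal c z j (A j) ≤ k + 1
  · simpa using sum_le_sum fun j (_ : j ∈ univ) => h j
  · push Not at h
    obtain ⟨j, hj⟩ := h
    have hkj := key j (by omega)
    rw [← hz]
    refine le_trans (le_of_eq (sum_congr rfl fun i _ => key i ?_))
      (sum_card_filter_le_of_isAllocation hA fun a => c a = z)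
    have := card_filter_le_colorVal_add_one c z hEF i j
    omega

end colorVal

/-- A finite type can be coloured with prescribed numbers of items of each colour. -/
lemma exists_coloring_card_fiber {ι I : Type*} [Fintype ι] [DecidableEq ι] [Fintype I]
    (s : ι → ℕ) (hs : ∑ j, s j = Fintype.card I) :
    ∃ c : I → ι, ∀ j, #{a | c a = j} = s j := by
  obtain ⟨e⟩ : Nonempty (I ≃ Σ j, Fin (s j)) := Fintype.card_eq.mp (by simp [hs])
  refine ⟨fun a => (e a).1, fun j => ?_⟩
  rw [← Fintype.card_subtype, ← Fintype.card_fin (s j)]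
  exact Fintype.card_congr
    ((e.subtypeEquiv fun a => Iff.rfl).trans (Equiv.sigmaSubtype j))

/-- For every `n ≥ 2` and `k ≥ 1` there are dichotomous XOS valuations on
`n(k+1) + (n−1)k` items such that the maximum welfare equals `2nk + n − k`, while
every EF1 allocation has welfare at most `n(k+1)`. -/
theorem welfare_gap_EF1_dichotomous_XOS (n k : ℕ) (hn : 2 ≤ n) (hk : 1 ≤ k) :
    ∃ f : Fin n → Finset (Fin (n * (k + 1) + (n - 1) * k)) → ℝ,
      (∀ i, IsXOS (f i) ∧ IsDichotomousR (f i)) ∧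
      -- the maximum welfare equals 2nk + n − k
      (∃ A : Fin n → Finset (Fin (n * (k + 1) + (n - 1) * k)), IsAllocation A ∧
        ∑ i, f i (A i) = 2 * n * k + n - k) ∧
      (∀ A : Fin n → Finset (Fin (n * (k + 1) + (n - 1) * k)), IsAllocation A →
        ∑ i, f i (A i) ≤ 2 * n * k + n - k) ∧
      -- every EF1 allocation has welfare at most n(k+1)
      (∀ A : Fin n → Finset (Fin (n * (k + 1) + (n - 1) * k)), IsAllocation A →
        EF1 f A → ∑ i, f i (A i) ≤ n * (k + 1)) := by
  have hpos : 0 < n := by omega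
  let z : Fin n := ⟨0, hpos⟩
  obtain ⟨c, hc⟩ := exists_coloring_card_fiber (I := Fin (n * (k + 1) + (n - 1) * k))
    (fun j : Fin n => if j = z then n * (k + 1) else k) (by
      rw [← add_sum_erase _ _ (mem_univ z), if_pos rfl,
        sum_congr rfl fun j hj => if_neg (ne_of_mem_erase hj)]
      simp)
  have hcard : ((Fintype.card (Fin (n * (k + 1) + (n - 1) * k)) : ℕ) : ℝ)
      = 2 * n * k + n - k := by
    rw [Fintype.card_fin]
    push_cast [Nat.cast_sub hpos]
    ring
  refine ⟨fun i S => (colorVal c z i S : ℝ),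
    fun i => ⟨isXOS_colorVal c z i, isDichotomousR_colorVal c z i⟩,
    ⟨fun i => {a | c a = i}, fun i j hij => ?_, ?_⟩, fun A hA => ?_, fun A hA hEF => ?_⟩
  · exact disjoint_filter.2 fun a _ hi hj => hij (hi.symm.trans hj)
  · rw [← hcard, ← sum_colorVal_fiber c z]
    push_cast
    rfl
  · rw [← hcard]
    beta_reduce
    exact_mod_cast sum_colorVal_le c z hA
  · beta_reduce
    exact_mod_cast sum_colorVal_le_of_EF1 (k := k) c z (by simp [hc])
      (fun j hj => by simp [hc, hj]) hA hEF
end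

section
/- For every n ≥ 2 and every even integer k ≥ 2 there exist identical dichotomous XOS valuations f_1 = … = f_n for n agents on a finite item set M with |M| = (n−1)k such that some allocation A has Nash social welfare Π_i f_i(A_i) = k^n / 4, while every EF1 allocation B satisfies Π_i f_i(B_i) ≤ (k/2 + 1)^n. (Concretely, take pairwise disjoint sets S_1,…,S_{n−1} each of size k and let every agent's valuation be f(S) = max_{1≤j≤n−1} |S ∩ S_j|.) -/
open Finset
open scoped Classical

variable {n : ℕ} {I : Type*} [DecidableEq I] [Fintype I]

section MaxClassCount

variable {α : Type*} {m : ℕ} (g : α → Fin (m + 1))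

/-- The largest number of items of `S` lying in a common class of the classification `g`. -/
def maxClassCount (S : Finset α) : ℕ :=
  Finset.univ.sup fun j => #{a ∈ S | g a = j}

lemma card_class_le_maxClassCount (S : Finset α)
    (j : Fin (m + 1)) : #{a ∈ S | g a = j} ≤ maxClassCount g S :=
  Finset.le_sup (f := fun j => #{a ∈ S | g a = j}) (Finset.mem_univ j)

lemma exists_maxClassCount_eq (S : Finset α) :
    ∃ j, maxClassCount g S = #{a ∈ S | g a = j} := by
  obtain ⟨j, -, hj⟩ := Finset.exists_mem_eq_sup Finset.univ Finset.univ_nonempty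
    (fun j => #{a ∈ S | g a = j})
  exact ⟨j, hj⟩

lemma maxClassCount_mono {S T : Finset α} (h : S ⊆ T) :
    maxClassCount g S ≤ maxClassCount g T := by
  obtain ⟨j, hj⟩ := exists_maxClassCount_eq g S
  rw [hj]
  exact (Finset.card_le_card (Finset.filter_subset_filter _ h)).trans
    (card_class_le_maxClassCount g T j)

lemma maxClassCount_insert_le [DecidableEq α] (S : Finset α) (a : α) :
    maxClassCount g (insert a S) ≤ maxClassCount g S + 1 := by
  obtain ⟨j, hj⟩ := exists_maxClassCount_eq g (insert a S)
  rw [hj]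
  refine le_trans ?_ (Nat.add_le_add_right (card_class_le_maxClassCount g S j) 1)
  rw [Finset.filter_insert]
  split_ifs
  · exact Finset.card_insert_le _ _
  · exact Nat.le_succ _

lemma maxClassCount_eq_card {S : Finset α} {j : Fin (m + 1)} (h : ∀ a ∈ S, g a = j) :
    maxClassCount g S = #S := by
  apply le_antisymm
  · exact Finset.sup_le fun _ _ => Finset.card_filter_le _ _
  · simpa [Finset.filter_true_of_mem h] using card_class_le_maxClassCount g S j

lemma isXOS_maxClassCount : IsXOS fun S : Finset α => (maxClassCount g S : ℝ) := by
  refine ⟨m, fun t a => if g a = t then 1 else 0, fun t a => by positivity, fun S => ?_⟩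
  simp only [Finset.sum_boole]
  apply le_antisymm
  · obtain ⟨j, hj⟩ := exists_maxClassCount_eq g S
    rw [hj]
    exact Finset.le_sup' (fun t => (#{a ∈ S | g a = t} : ℝ)) (Finset.mem_univ j)
  · exact Finset.sup'_le _ _ fun j _ => by
      exact_mod_cast card_class_le_maxClassCount g S j

end MaxClassCount

section Allocations

variable {m : ℕ} (g : I → Fin (m + 1))

lemma isDichotomousR_maxClassCount : IsDichotomousR fun S => (maxClassCount g S : ℝ) := by
  intro S a
  have h₁ := maxClassCount_mono g (Finset.subset_insert a S)
  have h₂ := maxClassCount_insert_le g S a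
  have h : maxClassCount g (insert a S) = maxClassCount g S ∨
      maxClassCount g (insert a S) = maxClassCount g S + 1 := by lia
  beta_reduce
  exact_mod_cast h

/-- When all classes have even size `k`, giving whole classes to all agents but two and
halving the remaining class yields Nash social welfare `k ^ (m + 2) / 4`. -/
lemma exists_isAllocation_prod_maxClassCount {k : ℕ} (hke : Even k)
    (hg : ∀ j, #{a | g a = j} = k) :
    ∃ A : Fin (m + 2) → Finset I, IsAllocation A ∧
      ∏ i, (maxClassCount g (A i) : ℝ) = (k : ℝ) ^ (m + 2) / 4 := by
  obtain ⟨c, rfl⟩ := hke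
  obtain ⟨T, hT, hTc⟩ := Finset.exists_subset_card_eq
    (show c ≤ #{a | g a = Fin.last m} by rw [hg]; lia)
  have hTg : ∀ a ∈ T, g a = Fin.last m := fun a ha => by simpa using hT ha
  have hRg : ∀ a ∈ ({a | g a = Fin.last m} : Finset I) \ T, g a = Fin.last m := by
    simp +contextual
  refine ⟨Fin.snoc (α := fun _ => Finset I) (Fin.snoc (α := fun _ => Finset I)
    (fun j : Fin m => {a | g a = j.castSucc}) (({a | g a = Fin.last m} : Finset I) \ T)) T,
    ?_, ?_⟩
  · have hne : ∀ j : Fin m, Fin.last m ≠ j.castSucc := fun j => (Fin.castSucc_ne_last j).symm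
    intro i j hij
    rw [Finset.disjoint_left]
    induction i using Fin.lastCases with
    | last =>
      induction j using Fin.lastCases with
      | last => exact absurd rfl hij
      | cast j => induction j using Fin.lastCases <;> simp <;> grind
    | cast i =>
      induction j using Fin.lastCases with
      | last => induction i using Fin.lastCases <;> simp <;> grind
      | cast j =>
        induction i using Fin.lastCases <;> induction j using Fin.lastCases <;>
          simp <;> grind
  · have hclass : ∀ j, maxClassCount g ({a | g a = j} : Finset I) = c + c := fun j => by
      rw [maxClassCount_eq_card g (j := j) (by simp), hg]
    have hR : #(({a | g a = Fin.last m} : Finset I) \ T) = c := by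
      rw [Finset.card_sdiff_of_subset hT, hg, hTc]; lia
    simp only [Fin.prod_univ_castSucc, Fin.snoc_castSucc, Fin.snoc_last, hclass,
      maxClassCount_eq_card g hTg, maxClassCount_eq_card g hRg, hTc, hR, Finset.prod_const,
      Finset.card_univ, Fintype.card_fin]
    push_cast
    ring

/-- With more agents than classes, two agents draw their value from the same class. -/
lemma exists_two_mul_maxClassCount_le {k : ℕ} (hg : ∀ j, #{a | g a = j} = k)
    {B : Fin (m + 2) → Finset I} (hB : IsAllocation B) :
    ∃ i, 2 * maxClassCount g (B i) ≤ k := by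
  choose c hc using fun i => exists_maxClassCount_eq g (B i)
  obtain ⟨i, j, hij, hcij⟩ := Fintype.exists_ne_map_eq_of_card_lt c (by simp)
  have hdisj : Disjoint ({a ∈ B i | g a = c i}) ({a ∈ B j | g a = c i}) :=
    Finset.disjoint_filter_filter (hB i j hij)
  have hsum : maxClassCount g (B i) + maxClassCount g (B j) ≤ k := by
    rw [hc i, hc j, ← hcij, ← Finset.card_union_of_disjoint hdisj, ← hg (c i)]
    apply Finset.card_le_card
    intro a
    simp only [Finset.mem_union, Finset.mem_filter, Finset.mem_univ, true_and]
    tauto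
  rcases le_total (maxClassCount g (B i)) (maxClassCount g (B j)) with h | h
  · exact ⟨i, by lia⟩
  · exact ⟨j, by lia⟩

lemma EF1.maxClassCount_le_add_one {B : Fin n → Finset I}
    (hB : EF1 (fun _ S => (maxClassCount g S : ℝ)) B) (i j : Fin n) :
    maxClassCount g (B j) ≤ maxClassCount g (B i) + 1 := by
  rcases hB i j with h | ⟨e, he, h⟩
  · exact (Nat.cast_le.mp h).trans (Nat.le_succ _)
  · have h' := maxClassCount_insert_le g ((B j).erase e) e
    rw [Finset.insert_erase he] at h'
    exact h'.trans (Nat.add_le_add_right (Nat.cast_le.mp h) 1)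

lemma prod_maxClassCount_le_of_EF1 {k : ℕ} (hg : ∀ j, #{a | g a = j} = k)
    {B : Fin (m + 2) → Finset I} (hB : IsAllocation B)
    (hEF : EF1 (fun _ S => (maxClassCount g S : ℝ)) B) :
    ∏ i, (maxClassCount g (B i) : ℝ) ≤ ((k : ℝ) / 2 + 1) ^ (m + 2) := by
  obtain ⟨i₀, hi₀⟩ := exists_two_mul_maxClassCount_le g hg hB
  have hi₀' : 2 * (maxClassCount g (B i₀) : ℝ) ≤ k := by exact_mod_cast hi₀
  calc ∏ i, (maxClassCount g (B i) : ℝ) ≤ ∏ _i : Fin (m + 2), ((k : ℝ) / 2 + 1) := by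
        refine Finset.prod_le_prod (fun _ _ => Nat.cast_nonneg _) fun j _ => ?_
        have h : (maxClassCount g (B j) : ℝ) ≤ maxClassCount g (B i₀) + 1 := by
          exact_mod_cast hEF.maxClassCount_le_add_one g i₀ j
        linarith
    _ = ((k : ℝ) / 2 + 1) ^ (m + 2) := by simp

end Allocations

lemma Fin.card_filter_divNat_eq {m k : ℕ} (j : Fin m) :
    #{a : Fin (m * k) | a.divNat = j} = k := by
  have h : ({a : Fin (m * k) | a.divNat = j} : Finset _) =
      (Finset.univ : Finset (Fin k)).map
        ⟨fun b => finProdFinEquiv (j, b), fun b c hbc => by simpa using hbc⟩ := by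
    ext a
    simp only [Finset.mem_filter, Finset.mem_univ, true_and, Finset.mem_map]
    constructor
    · rintro rfl
      exact ⟨a.modNat, finProdFinEquiv.apply_symm_apply a⟩
    · rintro ⟨b, rfl⟩
      exact congrArg Prod.fst (finProdFinEquiv.symm_apply_apply (j, b))
  rw [h, Finset.card_map, Finset.card_univ, Fintype.card_fin]

/-- For every `n ≥ 2` and even `k ≥ 2` there is a single dichotomous XOS valuation,
shared by all `n` agents, on `(n−1)k` items, such that some allocation has Nash social
welfare `k^n/4` while every EF1 allocation has Nash social welfare at most `(k/2+1)^n`. -/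
theorem NSW_gap_EF1_dichotomous_XOS (n k : ℕ) (hn : 2 ≤ n) (hk : 2 ≤ k) (hke : Even k) :
    ∃ f : Finset (Fin ((n - 1) * k)) → ℝ,
      (IsXOS f ∧ IsDichotomousR f) ∧
      (∃ A : Fin n → Finset (Fin ((n - 1) * k)), IsAllocation A ∧
        ∏ i, f (A i) = (k : ℝ) ^ n / 4) ∧
      (∀ B : Fin n → Finset (Fin ((n - 1) * k)), IsAllocation B →
        EF1 (fun _ => f) B → ∏ i, f (B i) ≤ ((k : ℝ) / 2 + 1) ^ n) := by
  obtain ⟨m, rfl⟩ : ∃ m, n = m + 2 := ⟨n - 2, by lia⟩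
  let g : Fin ((m + 1) * k) → Fin (m + 1) := Fin.divNat
  have hg : ∀ j, #{a | g a = j} = k := fun j => Fin.card_filter_divNat_eq j
  exact ⟨fun S => (maxClassCount g S : ℝ),
    ⟨isXOS_maxClassCount g, isDichotomousR_maxClassCount g⟩,
    exists_isAllocation_prod_maxClassCount g hke hg,
    fun _ hB hEF => prod_maxClassCount_le_of_EF1 g hg hB hEF⟩
end
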